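/- Let G = A * B be the free product of two nontrivial groups, and let H ≤ G be a finitely generated subgroup containing a nontrivial normal subgroup of G. Then H has finite index in G. -/

import Mathlib

open scoped Monoid.Coprod

/-!
Let `N ≤ H` be the nontrivial normal subgroup. Call the elements represented by the initial segments
of the reduced word of `g` the prefixes of `g`. For a letter `m`, every prefix of `m * g` other than
`1` is the `m`-translate of a prefix of `g`. Hence, `H` being finitely generated, there is a finite
set `F` such that for all `h ∈ H` and all `g` every prefix of `h * g` lies in `H * F` or is the
`h`-translate of a prefix of `g`.

Given `g`, pick `n ∈ N`, `n ≠ 1`, such that no cancellation occurs in `g * n`, and put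
`h = g * n * g⁻¹ ∈ N ≤ H`. As `g` is a prefix of `g * n = h * g`, either `g ∈ H * F`, or `h⁻¹ * g`
is a proper prefix of `g` lying in the coset `H g`. By induction on the length of `g`, every coset
`H g` meets `F`.
-/

namespace FreeProductPrefix

open Monoid Monoid.CoprodI
open scoped Pointwise

variable {ι : Type*}

section Words

variable {M : ι → Type*} [∀ i, Monoid (M i)]

theorem exists_neWord_prod_eq {g : CoprodI M} (hg : g ≠ 1) :
    ∃ (i j : ι) (w : NeWord M i j), w.prod = g := by
  classical
  obtain ⟨i, j, w, hw⟩ := NeWord.of_word (Word.equiv g) fun h => hg (Word.equiv.injective h)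
  exact ⟨i, j, w, (congrArg Word.prod hw).trans (Word.equiv.symm_apply_apply g)⟩

theorem neWord_prod_ne_one {i j : ι} (w : NeWord M i j) : w.prod ≠ 1 := by
  classical
  intro h
  have : w.toWord = Word.empty := Word.equiv.symm.injective h
  exact w.toList_ne_nil (congrArg Word.toList this)

variable [∀ i, DecidableEq (M i)]

theorem rcons_isPrefix_rcons {i : ι} {p q : Word.Pair M i} (head_eq : p.head = q.head)
    (tail_prefix : p.tail.toList <+: q.tail.toList) :
    (Word.rcons p).toList <+: (Word.rcons q).toList := by
  by_cases hq : q.head = 1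
  · simpa only [Word.rcons, head_eq, hq, dif_pos] using tail_prefix
  · simpa only [Word.rcons, head_eq, hq, dif_neg, not_false_eq_true, Word.cons_toList,
      List.prefix_cons_inj] using tail_prefix

variable [DecidableEq ι]

theorem equivPair_cons {i : ι} (m : M i) (w : Word M) (hw : w.fstIdx ≠ some i) (hm : m ≠ 1) :
    Word.equivPair i (Word.cons m w hw hm) = ⟨m, w, hw⟩ := by
  rw [← Equiv.eq_symm_apply, Word.equivPair_symm, Word.rcons, dif_neg hm]

theorem of_smul_isPrefix_of_smul {i : ι} (m : M i) {w v : Word M} (hw : w ≠ Word.empty)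
    (hwv : w.toList <+: v.toList) : (of m • w).toList <+: (of m • v).toList := by
  suffices (Word.equivPair i w).head = (Word.equivPair i v).head ∧
      (Word.equivPair i w).tail.toList <+: (Word.equivPair i v).tail.toList by
    rw [Word.of_smul_def, Word.of_smul_def]
    exact rcons_isPrefix_rcons (congrArg (m * ·) this.1) this.2
  cases w using Word.consRecOn with
  | empty => exact absurd rfl hw
  | cons j x w' hw' hx =>
  cases v using Word.consRecOn with
  | empty => exact absurd (List.prefix_nil.1 hwv) (List.cons_ne_nil _ _)
  | cons k y v' hv' hy =>
  obtain ⟨heq, htail⟩ := List.cons_prefix_cons.1 hwv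
  obtain ⟨rfl, hxy⟩ := Sigma.mk.inj heq
  obtain rfl := eq_of_heq hxy
  by_cases hji : j = i
  · subst hji
    rw [equivPair_cons, equivPair_cons]
    exact ⟨rfl, htail⟩
  · have fstIdx_ne : some j ≠ some i := by simpa using hji
    rw [Word.equivPair_eq_of_fstIdx_ne (by rwa [Word.fstIdx_cons]),
      Word.equivPair_eq_of_fstIdx_ne (by rwa [Word.fstIdx_cons])]
    exact ⟨rfl, hwv⟩

theorem equiv_mul (a b : CoprodI M) : Word.equiv (a * b) = a • Word.equiv b :=
  mul_smul a b (Word.empty : Word M)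

theorem equiv_prod (w : Word M) : Word.equiv w.prod = w :=
  Word.equiv.apply_symm_apply w

end Words

section Prefixes

variable {G : ι → Type*} [∀ i, Group (G i)] [DecidableEq ι] [∀ i, DecidableEq (G i)]

/-- The elements of the free product represented by an initial segment of the reduced word of `g`:
the vertices of the geodesic from `1` to `g` in the Cayley graph with respect to all letters. -/
def prefixes (g : CoprodI G) : Set (CoprodI G) :=
  {p | (Word.equiv p).toList <+: (Word.equiv g).toList}

theorem one_mem_prefixes (g : CoprodI G) : 1 ∈ prefixes g :=
  List.nil_prefix

theorem prod_mem_prefixes_prod {w v : Word G} (h : w.toList <+: v.toList) :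
    w.prod ∈ prefixes v.prod := by
  rwa [prefixes, Set.mem_ofPred_eq, equiv_prod, equiv_prod]

theorem length_lt_of_mem_prefixes {p g : CoprodI G} (hp : p ∈ prefixes g) (hne : p ≠ g) :
    (Word.equiv p).toList.length < (Word.equiv g).toList.length :=
  hp.length_le.lt_of_ne fun h => hne (Word.equiv.injective (Word.ext (hp.eq_of_length h)))

theorem prefixes_of_mul_subset {i : ι} (m : G i) (g : CoprodI G) :
    prefixes (of m * g) ⊆ {1} ∪ (of m : CoprodI G) • prefixes g := by
  intro p hp
  refine or_iff_not_imp_left.2 fun hp1 => Set.mem_smul_set_iff_inv_smul_mem.2 ?_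
  have hword : Word.equiv p ≠ Word.empty := fun h => hp1 (Word.equiv.injective h)
  have := of_smul_isPrefix_of_smul m⁻¹ hword hp
  rwa [← equiv_mul, ← equiv_mul, map_inv, inv_mul_cancel_left] at this

theorem exists_finite_prefixes_mul_subset (s : CoprodI G) :
    ∃ F : Set (CoprodI G), F.Finite ∧ ∀ g, prefixes (s * g) ⊆ F ∪ s • prefixes g := by
  induction s using CoprodI.induction_on with
  | one => exact ⟨∅, Set.finite_empty, fun g => by simp⟩
  | of i m => exact ⟨{1}, Set.finite_singleton 1, prefixes_of_mul_subset m⟩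
  | mul s t hs ht =>
    obtain ⟨F, hF, hs⟩ := hs
    obtain ⟨E, hE, ht⟩ := ht
    refine ⟨F ∪ s • E, hF.union hE.smul_set, fun g => ?_⟩
    calc prefixes (s * t * g) ⊆ F ∪ s • prefixes (t * g) := mul_assoc s t g ▸ hs (t * g)
      _ ⊆ F ∪ s • (E ∪ t • prefixes g) := by gcongr; exact ht g
      _ = F ∪ s • E ∪ (s * t) • prefixes g := by
        rw [Set.smul_set_union, smul_smul, Set.union_assoc]

theorem exists_finite_forall_mem_prefixes_mul_subset {S : Submonoid (CoprodI G)} (hS : S.FG) :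
    ∃ F : Set (CoprodI G), F.Finite ∧
      ∀ s ∈ S, ∀ g, prefixes (s * g) ⊆ (S : Set (CoprodI G)) * F ∪ s • prefixes g := by
  obtain ⟨T, rfl⟩ := hS
  choose E hE hprefixes using exists_finite_prefixes_mul_subset (G := G)
  refine ⟨⋃ t ∈ T, E t, T.finite_toSet.biUnion fun t _ => hE t, fun s hs => ?_⟩
  set S := Submonoid.closure (T : Set (CoprodI G))
  set F := ⋃ t ∈ T, E t
  induction hs using Submonoid.closure_induction with
  | mem t ht =>
    intro g
    have hEF : E t ⊆ S * F :=
      (Set.subset_biUnion_of_mem (u := E) ht).trans (Set.subset_mul_right F (one_mem S))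
    exact (hprefixes t g).trans (Set.union_subset_union_left _ hEF)
  | one => intro g; simp
  | mul s t hs _ ihs iht =>
    intro g
    have hsS : s • ((S : Set (CoprodI G)) * F) ⊆ S * F := by
      rw [← smul_mul_assoc]
      gcongr
      exact Set.smul_set_subset_iff.2 fun _ hu => mul_mem hs hu
    calc prefixes (s * t * g) ⊆ S * F ∪ s • prefixes (t * g) := mul_assoc s t g ▸ ihs (t * g)
      _ ⊆ S * F ∪ s • (S * F ∪ t • prefixes g) := by gcongr; exact iht g
      _ = S * F ∪ s • (S * F) ∪ (s * t) • prefixes g := by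
        rw [Set.smul_set_union, smul_smul, Set.union_assoc]
      _ ⊆ S * F ∪ (s * t) • prefixes g := by rw [Set.union_eq_self_of_subset_right hsS]

end Prefixes

section NormalSubgroup

variable {G : ι → Type*} [∀ i, Group (G i)] [Nontrivial ι] [∀ i, Nontrivial (G i)]
  {N : Subgroup (CoprodI G)} (hN : N.Normal) (hNbot : N ≠ ⊥)

include hN hNbot

theorem exists_neWord_prod_mem_of_normal (i : ι) :
    ∃ j k, j ≠ i ∧ ∃ w : NeWord G j k, w.prod ∈ N := by
  obtain ⟨n, hn, hn1⟩ := N.bot_or_exists_ne_one.resolve_left hNbot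
  obtain ⟨j, k, w, rfl⟩ := exists_neWord_prod_eq hn1
  by_cases hj : j = i
  · by_cases hk : k = i
    · subst hj hk
      obtain ⟨l, hl⟩ := exists_ne k
      obtain ⟨b, hb⟩ := exists_ne (1 : G l)
      let conj := ((NeWord.singleton b hb).append hl w).append hl.symm
        (NeWord.singleton b⁻¹ (inv_ne_one.2 hb))
      refine ⟨l, l, hl, conj, ?_⟩
      simpa [conj] using hN.conj_mem _ hn (of b)
    · exact ⟨k, j, hk, w.inv, by rw [NeWord.inv_prod]; exact inv_mem hn⟩
  · exact ⟨j, k, hj, w, hn⟩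

theorem exists_mem_prefixes_mul_of_normal [DecidableEq ι] [∀ i, DecidableEq (G i)]
    (g : CoprodI G) :
    ∃ n ∈ N, n ≠ 1 ∧ g ∈ prefixes (g * n) := by
  by_cases hg : g = 1
  · obtain ⟨n, hn, hn1⟩ := N.bot_or_exists_ne_one.resolve_left hNbot
    exact ⟨n, hn, hn1, hg ▸ one_mem_prefixes _⟩
  · obtain ⟨_, i, u, rfl⟩ := exists_neWord_prod_eq hg
    obtain ⟨j, _, hji, w, hw⟩ := exists_neWord_prod_mem_of_normal hN hNbot i
    refine ⟨w.prod, hw, neWord_prod_ne_one w, ?_⟩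
    rw [← NeWord.append_prod (hne := hji.symm)]
    exact prod_mem_prefixes_prod (List.prefix_append u.toList w.toList)

theorem exists_finite_mul_eq_univ_of_fg {H : Subgroup (CoprodI G)} (hH : H.FG) (hNH : N ≤ H) :
    ∃ F : Set (CoprodI G), F.Finite ∧ (H : Set (CoprodI G)) * F = Set.univ := by
  classical
  obtain ⟨F, hF, hprefixes⟩ :=
    exists_finite_forall_mem_prefixes_mul_subset ((Subgroup.fg_iff_submonoid_fg H).1 hH)
  refine ⟨F, hF, Set.eq_univ_of_forall fun g => ?_⟩
  induction hlen : (Word.equiv g).toList.length using Nat.strong_induction_on generalizing g with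
  | _ _ ih =>
  subst hlen
  obtain ⟨n, hn, hn1, hg⟩ := exists_mem_prefixes_mul_of_normal hN hNbot g
  set h := g * n * g⁻¹ with h_def
  have h_mem : h ∈ H := hNH (hN.conj_mem n hn g)
  have hgn : g * n = h * g := by rw [h_def, inv_mul_cancel_right]
  rcases hprefixes h h_mem g (hgn ▸ hg) with hgF | ⟨p, hp, hpg : h * p = g⟩
  · exact hgF
  · have hpne : p ≠ g := by
      rintro rfl
      exact hn1 (conj_eq_one_iff.1 (mul_eq_right.1 hpg))
    obtain ⟨k, hk, f, hf, rfl⟩ := ih _ (length_lt_of_mem_prefixes hp hpne) p rfl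
    exact ⟨h * k, mul_mem h_mem hk, f, hf, (mul_assoc h k f).trans hpg⟩

end NormalSubgroup

theorem finiteIndex_of_mul_eq_univ {G : Type*} [Group G] {H : Subgroup G} {F : Set G}
    (hF : F.Finite) (hHF : (H : Set G) * F = Set.univ) : H.FiniteIndex := by
  refine Subgroup.finiteIndex_of_leftCoset_cover_const (s := hF.toFinset) (g := (·⁻¹)) ?_
  refine Set.eq_univ_of_forall fun g => ?_
  obtain ⟨h, hh, f, hf, hg : h * f = g⁻¹⟩ := Set.eq_univ_iff_forall.1 hHF g⁻¹
  have : g = f⁻¹ * h⁻¹ := by rw [← mul_inv_rev, hg, inv_inv]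
  exact Set.mem_biUnion (hF.mem_toFinset.2 hf) ⟨h⁻¹, inv_mem hh, this.symm⟩

section Coprod

/-- The free product of a family indexed by `Bool` as a binary free product. -/
def coprodIBoolEquiv (M : Bool → Type*) [∀ b, Monoid (M b)] :
    CoprodI M ≃* M false ∗ M true :=
  MonoidHom.toMulEquiv
    (CoprodI.lift (Bool.rec Coprod.inl Coprod.inr))
    (Coprod.lift CoprodI.of CoprodI.of)
    (by ext b x; cases b <;> simp)
    (by ext x <;> simp)

universe u v

/-- The groups `A` and `B` as a family indexed by `Bool`, lifted to a common universe. -/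
def Factor (A : Type u) (B : Type v) : Bool → Type (max u v)
  | false => ULift.{v} A
  | true => ULift.{u} B

variable (A : Type u) (B : Type v)

instance [Group A] [Group B] : ∀ b, Group (Factor A B b)
  | false => inferInstanceAs (Group (ULift A))
  | true => inferInstanceAs (Group (ULift B))

instance [Nontrivial A] [Nontrivial B] : ∀ b, Nontrivial (Factor A B b)
  | false => inferInstanceAs (Nontrivial (ULift A))
  | true => inferInstanceAs (Nontrivial (ULift B))

/-- The binary free product `A ∗ B` as a free product of a family, the setting in which reduced
words are available. -/
def coprodEquivCoprodI [Group A] [Group B] : A ∗ B ≃* CoprodI (Factor A B) :=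
  (MulEquiv.coprodCongr MulEquiv.ulift.symm MulEquiv.ulift.symm).trans
    (coprodIBoolEquiv (Factor A B)).symm

end Coprod

section Transport

variable {G G' : Type*} [Group G] [Group G']

theorem fg_map {H : Subgroup G} (hH : H.FG) (f : G →* G') : (H.map f).FG :=
  (Subgroup.fg_iff_submonoid_fg _).2 (((Subgroup.fg_iff_submonoid_fg H).1 hH).map f)

theorem finiteIndex_map_equiv {H : Subgroup G} (e : G ≃* G') :
    (H.map (e : G →* G')).FiniteIndex ↔ H.FiniteIndex := by
  rw [Subgroup.finiteIndex_iff, Subgroup.finiteIndex_iff, Subgroup.index_map_equiv]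

end Transport

end FreeProductPrefix

open FreeProductPrefix in
theorem stmt9_general {ι : Type*} [Nontrivial ι] {G : ι → Type*} [∀ i, Group (G i)]
    [∀ i, Nontrivial (G i)] (H : Subgroup (Monoid.CoprodI G)) (hH : H.FG)
    (N : Subgroup (Monoid.CoprodI G)) (hN : N.Normal) (hNbot : N ≠ ⊥) (hNH : N ≤ H) :
    H.FiniteIndex := by
  obtain ⟨_, hF, hHF⟩ := exists_finite_mul_eq_univ_of_fg hN hNbot hH hNH
  exact finiteIndex_of_mul_eq_univ hF hHF

/-- B. Baumslag's theorem: if `G = A * B` is a free product of two nontrivial groups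
and `H ≤ G` is a finitely generated subgroup containing a nontrivial normal subgroup
of `G`, then `H` has finite index in `G`. -/
theorem stmt9 {A B : Type*} [Group A] [Group B] [Nontrivial A] [Nontrivial B]
    (H : Subgroup (A ∗ B)) (hH : H.FG)
    (N : Subgroup (A ∗ B)) (hN : N.Normal) (hNbot : N ≠ ⊥) (hNH : N ≤ H) :
    H.FiniteIndex := by
  let e := FreeProductPrefix.coprodEquivCoprodI A B
  exact (FreeProductPrefix.finiteIndex_map_equiv e).1 <|
    stmt9_general _ (FreeProductPrefix.fg_map hH _) (N.map e.toMonoidHom) (hN.map _ e.surjective)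
      ((Subgroup.map_eq_bot_iff_of_injective N e.injective).not.2 hNbot) (Subgroup.map_mono hNH)
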